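/- There exists a universal constant K > 0 such that for every k ≥ 1 and every ψ ∈ C_c^∞(ℝ²) with supp ψ ⊂ {2^{k−1} ≤ |x| ≤ 2^{k+1}}, the function F(θ) := T(|x|^{−2}ψ)(0,θ) on S¹ satisfies max_{0 ≤ j ≤ 3} sup_{θ∈S¹} |∂_θ^j F(θ)| ≤ K ‖ψ‖_{S¹₃}. -/

import Mathlib

open MeasureTheory Real

noncomputable section

/-- Directional derivative of a function on `ℝ²` in the direction `v`. -/
def pd (v : ℝ × ℝ) (ψ : ℝ × ℝ → ℝ) : ℝ × ℝ → ℝ := fun p => fderiv ℝ ψ p v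

/-- The X-ray transform `Tψ(s,θ)`. -/
def xray (ψ : ℝ × ℝ → ℝ) (s θ : ℝ) : ℝ :=
  ∫ t : ℝ, ψ (t * Real.cos θ - s * Real.sin θ, t * Real.sin θ + s * Real.cos θ)

/-- The function `x ↦ |x|⁻² ψ(x)` on `ℝ²`. -/
def invSq (ψ : ℝ × ℝ → ℝ) : ℝ × ℝ → ℝ := fun p => (p.1 ^ 2 + p.2 ^ 2)⁻¹ * ψ p

/-- The Kohn–Nirenberg norm `‖ψ‖_{S¹₃}` is at most `C`. -/
def KNle (ψ : ℝ × ℝ → ℝ) (C : ℝ) : Prop :=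
  ∀ γ₁ γ₂ : ℕ, γ₁ + γ₂ ≤ 3 → ∀ p : ℝ × ℝ,
    |Real.sqrt (1 + p.1 ^ 2 + p.2 ^ 2) ^ ((γ₁ + γ₂ : ℤ) - 1) *
      (pd (1, 0))^[γ₁] ((pd (0, 1))^[γ₂] ψ) p| ≤ C

/-- The dyadic annulus `{2^{k−1} ≤ |x| ≤ 2^{k+1}}` in `ℝ²`. -/
def annulus (k : ℕ) : Set (ℝ × ℝ) :=
  {p | (2 : ℝ) ^ ((k : ℤ) - 1) ≤ Real.sqrt (p.1 ^ 2 + p.2 ^ 2) ∧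
       Real.sqrt (p.1 ^ 2 + p.2 ^ 2) ≤ 2 ^ (k + 1)}

/-- The Japanese bracket `⟨x⟩ = √(1 + |x|²)`. -/
def bracket (p : ℝ × ℝ) : ℝ := Real.sqrt (1 + p.1 ^ 2 + p.2 ^ 2)

lemma one_le_bracket (p : ℝ × ℝ) : 1 ≤ bracket p :=
  Real.one_le_sqrt.2 (by nlinarith [sq_nonneg p.1, sq_nonneg p.2])

lemma bracket_pos (p : ℝ × ℝ) : 0 < bracket p := zero_lt_one.trans_le (one_le_bracket p)

lemma abs_fst_le_bracket (p : ℝ × ℝ) : |p.1| ≤ bracket p :=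
  Real.abs_le_sqrt (by nlinarith [sq_nonneg p.2])

lemma abs_snd_le_bracket (p : ℝ × ℝ) : |p.2| ≤ bracket p :=
  Real.abs_le_sqrt (by nlinarith [sq_nonneg p.1])

/-- The rotation field `x ∂_y - y ∂_x` applied to `ψ`. -/
def rot (ψ : ℝ × ℝ → ℝ) : ℝ × ℝ → ℝ := fun p => p.1 * pd (0, 1) ψ p - p.2 * pd (1, 0) ψ p

lemma rot_eq_fderiv (ψ : ℝ × ℝ → ℝ) (p : ℝ × ℝ) : rot ψ p = fderiv ℝ ψ p (-p.2, p.1) := by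
  have h : ((-p.2, p.1) : ℝ × ℝ) = p.1 • ((0, 1) : ℝ × ℝ) - p.2 • ((1, 0) : ℝ × ℝ) := by
    ext <;> simp
  simp only [rot, pd, h, map_sub, map_smul, smul_eq_mul]

lemma contDiff_pd {ψ : ℝ × ℝ → ℝ} (hψ : ContDiff ℝ (⊤ : ℕ∞) ψ) (v : ℝ × ℝ) :
    ContDiff ℝ (⊤ : ℕ∞) (pd v ψ) :=
  (hψ.fderiv_right (m := (⊤ : ℕ∞)) le_rfl).clm_apply contDiff_const

lemma contDiff_rot {ψ : ℝ × ℝ → ℝ} (hψ : ContDiff ℝ (⊤ : ℕ∞) ψ) :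
    ContDiff ℝ (⊤ : ℕ∞) (rot ψ) :=
  (contDiff_fst.mul (contDiff_pd hψ _)).sub (contDiff_snd.mul (contDiff_pd hψ _))

lemma pd_comm {ψ : ℝ × ℝ → ℝ} (hψ : ContDiff ℝ (⊤ : ℕ∞) ψ) (v w : ℝ × ℝ) :
    pd v (pd w ψ) = pd w (pd v ψ) := by
  funext p
  have hd : DifferentiableAt ℝ (fderiv ℝ ψ) p :=
    ((hψ.fderiv_right (m := (⊤ : ℕ∞)) le_rfl).differentiable (by simp)) p
  have hsymm : IsSymmSndFDerivAt ℝ ψ p := hψ.contDiffAt.isSymmSndFDerivAt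
    (by simpa using WithTop.coe_le_coe.2 (le_top : (2 : ℕ∞) ≤ ⊤))
  have key : ∀ a b : ℝ × ℝ, pd a (pd b ψ) p = fderiv ℝ (fderiv ℝ ψ) p a b := fun a b => by
    change fderiv ℝ (fun q => fderiv ℝ ψ q b) p a = _
    rw [fderiv_clm_apply hd (differentiableAt_const b)]
    simp
  rw [key, key, hsymm.eq]

lemma pd_rot {ψ : ℝ × ℝ → ℝ} (hψ : ContDiff ℝ (⊤ : ℕ∞) ψ) (v : ℝ × ℝ) :
    pd v (rot ψ) = fun p => rot (pd v ψ) p + (v.1 * pd (0, 1) ψ p - v.2 * pd (1, 0) ψ p) := by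
  funext p
  have hdiff : ∀ w, DifferentiableAt ℝ (pd w ψ) p := fun w =>
    ((contDiff_pd hψ w).differentiable (by simp)) p
  have h := (hasFDerivAt_fst (𝕜 := ℝ) (p := p)).mul (hdiff (0, 1)).hasFDerivAt |>.sub
    ((hasFDerivAt_snd (𝕜 := ℝ) (p := p)).mul (hdiff (1, 0)).hasFDerivAt)
  have h' : pd v (rot ψ) p = _ := congrArg (fun L => L v) h.fderiv
  have hx : fderiv ℝ (pd (0, 1) ψ) p v = pd (0, 1) (pd v ψ) p := congrFun (pd_comm hψ v (0, 1)) p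
  have hy : fderiv ℝ (pd (1, 0) ψ) p v = pd (1, 0) (pd v ψ) p := congrFun (pd_comm hψ v (1, 0)) p
  rw [h']
  simp [hx, hy, rot]
  ring

/-- The derivatives of `ψ` of order `i ≤ n` are at most `C ⟨x⟩^{1-m-i}` in absolute value. -/
def SymbolBound : ℕ → ℕ → (ℝ × ℝ → ℝ) → ℝ → Prop
  | 0, m, ψ, C => ∀ p, |ψ p| * bracket p ^ m ≤ C * bracket p
  | n + 1, m, ψ, C => (∀ p, |ψ p| * bracket p ^ m ≤ C * bracket p) ∧
      SymbolBound n (m + 1) (pd (1, 0) ψ) C ∧ SymbolBound n (m + 1) (pd (0, 1) ψ) C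

namespace SymbolBound

variable {n m : ℕ} {ψ φ : ℝ × ℝ → ℝ} {C C' : ℝ}

lemma abs_le (h : SymbolBound n m ψ C) (p : ℝ × ℝ) : |ψ p| * bracket p ^ m ≤ C * bracket p := by
  cases n with
  | zero => exact h p
  | succ n => exact h.1 p

lemma nonneg (h : SymbolBound n m ψ C) : 0 ≤ C :=
  nonneg_of_mul_nonneg_left
    ((mul_nonneg (abs_nonneg (ψ 0)) (pow_pos (bracket_pos 0) m).le).trans (h.abs_le 0))
    (bracket_pos 0)

lemma of_succ (h : SymbolBound (n + 1) m ψ C) : SymbolBound n m ψ C := by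
  induction n generalizing m ψ with
  | zero => exact h.1
  | succ n ih => exact ⟨h.1, ih h.2.1, ih h.2.2⟩

lemma neg (h : SymbolBound n m ψ C) : SymbolBound n m (fun p => -ψ p) C := by
  have hpd : ∀ (v : ℝ × ℝ) (ψ : ℝ × ℝ → ℝ), pd v (fun p => -ψ p) = fun p => -pd v ψ p :=
    fun v ψ => by
      funext p
      simp [pd, fderiv_fun_neg]
  induction n generalizing m ψ with
  | zero => exact fun p => by simpa using h p
  | succ n ih =>
    refine ⟨fun p => by simpa using h.1 p, ?_, ?_⟩
    · rw [hpd]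
      exact ih h.2.1
    · rw [hpd]
      exact ih h.2.2

lemma abs_add_le (h : SymbolBound n m ψ C) (h' : SymbolBound n m φ C') (p : ℝ × ℝ) :
    |ψ p + φ p| * bracket p ^ m ≤ (C + C') * bracket p :=
  calc |ψ p + φ p| * bracket p ^ m ≤ (|ψ p| + |φ p|) * bracket p ^ m :=
        mul_le_mul_of_nonneg_right (_root_.abs_add_le _ _) (pow_pos (bracket_pos p) m).le
    _ ≤ (C + C') * bracket p := by linarith [h.abs_le p, h'.abs_le p]

lemma add (hψ : ContDiff ℝ (⊤ : ℕ∞) ψ) (hφ : ContDiff ℝ (⊤ : ℕ∞) φ)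
    (h : SymbolBound n m ψ C) (h' : SymbolBound n m φ C') :
    SymbolBound n m (fun p => ψ p + φ p) (C + C') := by
  induction n generalizing m ψ φ with
  | zero => exact abs_add_le h h'
  | succ n ih =>
    have hpd : ∀ v, pd v (fun p => ψ p + φ p) = fun p => pd v ψ p + pd v φ p := fun v => by
      funext p
      simp [pd, fderiv_fun_add (hψ.differentiable (by simp) p) (hφ.differentiable (by simp) p)]
    refine ⟨abs_add_le h h', ?_, ?_⟩
    · rw [hpd]
      exact ih (contDiff_pd hψ _) (contDiff_pd hφ _) h.2.1 h'.2.1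
    · rw [hpd]
      exact ih (contDiff_pd hψ _) (contDiff_pd hφ _) h.2.2 h'.2.2

lemma abs_rot_le (h : SymbolBound (n + 1) m ψ C) (p : ℝ × ℝ) :
    |rot ψ p| * bracket p ^ m ≤ 2 * C * bracket p := by
  have hw := pow_pos (bracket_pos p) m
  have hx := h.2.1.abs_le p
  have hy := h.2.2.abs_le p
  rw [pow_succ] at hx hy
  calc |rot ψ p| * bracket p ^ m
      ≤ (|p.1| * |pd (0, 1) ψ p| + |p.2| * |pd (1, 0) ψ p|) * bracket p ^ m := by
        rw [← abs_mul, ← abs_mul]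
        exact mul_le_mul_of_nonneg_right (abs_sub _ _) hw.le
    _ ≤ (bracket p * |pd (0, 1) ψ p| + bracket p * |pd (1, 0) ψ p|) * bracket p ^ m := by
        gcongr
        · exact abs_fst_le_bracket p
        · exact abs_snd_le_bracket p
    _ ≤ 2 * C * bracket p := by linarith

lemma rot (hψ : ContDiff ℝ (⊤ : ℕ∞) ψ) (h : SymbolBound (n + 1) m ψ C) :
    SymbolBound n m (rot ψ) ((n + 2) * C) := by
  induction n generalizing m ψ with
  | zero => exact fun p => by simpa using h.abs_rot_le p
  | succ n ih =>
    have hC := h.nonneg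
    have hx := add (contDiff_rot (contDiff_pd hψ _)) (contDiff_pd hψ _)
      (ih (contDiff_pd hψ _) h.2.1) h.2.2.of_succ
    have hy := add (contDiff_rot (contDiff_pd hψ _)) (contDiff_pd hψ _).neg
      (ih (contDiff_pd hψ _) h.2.2) h.2.1.of_succ.neg
    have hconst : ((n + 2 : ℝ) * C + C) = ((n + 1 : ℕ) + 2) * C := by
      push_cast
      ring
    rw [hconst] at hx hy
    refine ⟨fun p => (h.abs_rot_le p).trans ?_, ?_, ?_⟩
    · have := bracket_pos p
      gcongr
      linarith [(Nat.cast_nonneg (n + 1) : (0 : ℝ) ≤ _)]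
    · rw [pd_rot hψ]
      simpa using hx
    · rw [pd_rot hψ]
      simpa using hy

lemma abs_rot_iterate_le (h : SymbolBound n 0 ψ C) (hψ : ContDiff ℝ (⊤ : ℕ∞) ψ) {j : ℕ}
    (hj : j ≤ n) (p : ℝ × ℝ) : |_root_.rot^[j] ψ p| ≤ (n + 1).factorial * C * bracket p := by
  induction n generalizing ψ C j with
  | zero =>
    obtain rfl : j = 0 := by omega
    simpa using h p
  | succ n ih =>
    cases j with
    | zero =>
      have h1 := h.abs_le p
      have hf : (1 : ℝ) ≤ (n + 1 + 1).factorial := by exact_mod_cast Nat.factorial_pos _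
      have hC := mul_nonneg h.nonneg (bracket_pos p).le
      simp only [pow_zero, mul_one] at h1
      simp only [Function.iterate_zero, id_eq]
      nlinarith
    | succ j =>
      refine (ih (h.rot hψ) (contDiff_rot hψ) (j := j) (by omega)).trans_eq ?_
      rw [Nat.factorial_succ (n + 1)]
      push_cast
      ring

end SymbolBound

lemma KNle.symbolBound {ψ : ℝ × ℝ → ℝ} {C : ℝ} (h : KNle ψ C) (hψ : ContDiff ℝ (⊤ : ℕ∞) ψ) :
    SymbolBound 3 0 ψ C := by
  have key : ∀ a b : ℕ, a + b ≤ 3 → ∀ p,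
      |(pd (1, 0))^[a] ((pd (0, 1))^[b] ψ) p| * bracket p ^ (a + b) ≤ C * bracket p := by
    intro a b hab p
    have hp := bracket_pos p
    have h1 := h a b hab p
    change |bracket p ^ ((a + b : ℤ) - 1) * _| ≤ C at h1
    rw [abs_mul, abs_of_pos (zpow_pos hp _), zpow_sub_one₀ hp.ne', ← Nat.cast_add, zpow_natCast,
      mul_right_comm, ← div_eq_mul_inv, div_le_iff₀ hp] at h1
    linarith
  have hx := contDiff_pd hψ (1, 0)
  have hy := contDiff_pd hψ (0, 1)
  have c := pd_comm hψ (0, 1) (1, 0)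
  have cx := pd_comm hx (0, 1) (1, 0)
  have cy := pd_comm hy (0, 1) (1, 0)
  refine ⟨key 0 0 (by norm_num), ⟨key 1 0 (by norm_num),
    ⟨key 2 0 (by norm_num), key 3 0 (by norm_num), ?_⟩, ⟨?_, ?_, ?_⟩⟩,
    ⟨key 0 1 (by norm_num), ⟨key 1 1 (by norm_num), key 2 1 (by norm_num), ?_⟩,
    ⟨key 0 2 (by norm_num), key 1 2 (by norm_num), key 0 3 (by norm_num)⟩⟩⟩
  · rw [cx, c]
    exact key 2 1 (by norm_num)
  · rw [c]
    exact key 1 1 (by norm_num)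
  · rw [c]
    exact key 2 1 (by norm_num)
  · rw [c, cy]
    exact key 1 2 (by norm_num)
  · rw [cy]
    exact key 1 2 (by norm_num)

lemma tsupport_rot_subset (ψ : ℝ × ℝ → ℝ) : tsupport (rot ψ) ⊆ tsupport ψ := by
  refine closure_minimal (fun p hp => support_fderiv_subset ℝ fun h0 => hp ?_)
    (isClosed_tsupport ψ)
  rw [rot_eq_fderiv, h0]
  rfl

lemma rot_iterate_regular {ψ : ℝ × ℝ → ℝ} {s : Set (ℝ × ℝ)} (hψ : ContDiff ℝ (⊤ : ℕ∞) ψ)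
    (hc : HasCompactSupport ψ) (hs : tsupport ψ ⊆ s) (j : ℕ) :
    ContDiff ℝ (⊤ : ℕ∞) (rot^[j] ψ) ∧ HasCompactSupport (rot^[j] ψ) ∧
      tsupport (rot^[j] ψ) ⊆ s := by
  induction j with
  | zero => exact ⟨hψ, hc, hs⟩
  | succ j ih =>
    rw [Function.iterate_succ_apply']
    exact ⟨contDiff_rot ih.1,
      ih.2.1.of_isClosed_subset (isClosed_tsupport _) (tsupport_rot_subset _),
      (tsupport_rot_subset _).trans ih.2.2⟩

lemma xray_invSq_zero (ψ : ℝ × ℝ → ℝ) (θ : ℝ) :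
    xray (invSq ψ) 0 θ = ∫ t : ℝ, (t ^ 2)⁻¹ * ψ (t * Real.cos θ, t * Real.sin θ) := by
  refine integral_congr_ae (.of_forall fun t => ?_)
  have h : (t * Real.cos θ) ^ 2 + (t * Real.sin θ) ^ 2 = t ^ 2 := by
    linear_combination t ^ 2 * Real.sin_sq_add_cos_sq θ
  simp [invSq, h]

lemma abs_radial_le_indicator {ψ : ℝ × ℝ → ℝ} {k : ℕ} {A : ℝ} (hs : tsupport ψ ⊆ annulus k)
    (hA : ∀ p, |ψ p| ≤ A * bracket p) (θ t : ℝ) :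
    |(t ^ 2)⁻¹ * ψ (t * Real.cos θ, t * Real.sin θ)| ≤
      (Set.Icc (-2 ^ (k + 1)) (2 ^ (k + 1)) : Set ℝ).indicator
        (fun _ => 32 * A / 2 ^ (k + 1)) t := by
  have hA0 : 0 ≤ A := nonneg_of_mul_nonneg_left ((abs_nonneg _).trans (hA 0)) (bracket_pos 0)
  by_cases h0 : ψ (t * Real.cos θ, t * Real.sin θ) = 0
  · rw [h0, mul_zero, abs_zero]
    exact Set.indicator_nonneg (fun _ _ => by positivity) t
  obtain ⟨h1, h2⟩ := hs (subset_tsupport ψ h0)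
  have h : (t * Real.cos θ) ^ 2 + (t * Real.sin θ) ^ 2 = t ^ 2 := by
    linear_combination t ^ 2 * Real.sin_sq_add_cos_sq θ
  have hb := hA (t * Real.cos θ, t * Real.sin θ)
  have hbr : bracket (t * Real.cos θ, t * Real.sin θ) = Real.sqrt (1 + t ^ 2) := by
    rw [bracket, add_assoc, h]
  simp only [h, Real.sqrt_sq_eq_abs] at h1 h2
  rw [Set.indicator_of_mem (Set.mem_Icc.2 (abs_le.1 h2))]
  rw [hbr] at hb
  have hR1 : (2 : ℝ) ^ (k + 1) = 4 * 2 ^ ((k : ℤ) - 1) := by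
    rw [zpow_sub_one₀ two_ne_zero, zpow_natCast]
    ring
  have hR : (1 : ℝ) ≤ 2 ^ (k + 1) := one_le_pow₀ one_le_two
  set R : ℝ := 2 ^ (k + 1)
  have hlow : R / 4 ≤ |t| := by linarith
  have ht : R ^ 2 / 16 ≤ t ^ 2 := by
    rw [← sq_abs t]
    nlinarith
  have hsqrt : Real.sqrt (1 + t ^ 2) ≤ 2 * R := by
    refine Real.sqrt_le_iff.2 ⟨by linarith, ?_⟩
    rw [← sq_abs t]
    nlinarith [abs_nonneg t]
  rw [abs_mul, abs_of_nonneg (by positivity : 0 ≤ (t ^ 2)⁻¹)]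
  calc (t ^ 2)⁻¹ * |ψ (t * Real.cos θ, t * Real.sin θ)|
      ≤ (R ^ 2 / 16)⁻¹ * (A * (2 * R)) := by
        gcongr
        exact hb.trans (by gcongr)
    _ = 32 * A / R := by
        field_simp
        ring

lemma integrable_indicator_Icc_const (a b c : ℝ) :
    Integrable ((Set.Icc a b : Set ℝ).indicator fun _ => c) :=
  (integrable_indicator_iff measurableSet_Icc).2 (integrableOn_const (by simp))

lemma abs_xray_invSq_le {ψ : ℝ × ℝ → ℝ} {k : ℕ} {A : ℝ} (hs : tsupport ψ ⊆ annulus k)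
    (hA : ∀ p, |ψ p| ≤ A * bracket p) (θ : ℝ) : |xray (invSq ψ) 0 θ| ≤ 64 * A := by
  rw [xray_invSq_zero, ← Real.norm_eq_abs]
  refine (norm_integral_le_of_norm_le (integrable_indicator_Icc_const _ _ _)
    (.of_forall fun t => abs_radial_le_indicator hs hA θ t)).trans_eq ?_
  have hR : (0 : ℝ) ≤ 2 ^ (k + 1) := by positivity
  rw [integral_indicator measurableSet_Icc, setIntegral_const, measureReal_def, Real.volume_Icc,
    ENNReal.toReal_ofReal (by linarith), smul_eq_mul]
  field_simp
  ring

lemma exists_abs_le_mul_bracket {ψ : ℝ × ℝ → ℝ} (hψ : Continuous ψ) (hc : HasCompactSupport ψ) :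
    ∃ A, ∀ p, |ψ p| ≤ A * bracket p := by
  obtain ⟨A, hA⟩ := hc.exists_bound_of_continuous hψ
  have hA0 : 0 ≤ A := (norm_nonneg _).trans (hA 0)
  exact ⟨A, fun p => (hA p).trans (le_mul_of_one_le_right hA0 (one_le_bracket p))⟩

lemma aestronglyMeasurable_radial {ψ : ℝ × ℝ → ℝ} (hψ : Continuous ψ) (θ : ℝ) :
    AEStronglyMeasurable (fun t : ℝ => (t ^ 2)⁻¹ * ψ (t * Real.cos θ, t * Real.sin θ)) := by
  have h : Continuous fun t : ℝ => ψ (t * Real.cos θ, t * Real.sin θ) := by fun_prop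
  exact ((measurable_id.pow_const 2).inv.mul h.measurable).aestronglyMeasurable

lemma hasDerivAt_comp_polar {ψ : ℝ × ℝ → ℝ} (hψ : ContDiff ℝ (⊤ : ℕ∞) ψ) (t θ : ℝ) :
    HasDerivAt (fun θ => ψ (t * Real.cos θ, t * Real.sin θ))
      (rot ψ (t * Real.cos θ, t * Real.sin θ)) θ := by
  have hγ := ((Real.hasDerivAt_cos θ).const_mul t).prodMk ((Real.hasDerivAt_sin θ).const_mul t)
  have h := (hψ.differentiable (by simp) (t * Real.cos θ, t * Real.sin θ)).hasFDerivAt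
    |>.comp_hasDerivAt θ hγ
  rw [rot_eq_fderiv]
  simpa [Function.comp_def] using! h

lemma hasDerivAt_xray_invSq {ψ : ℝ × ℝ → ℝ} {k : ℕ} (hψ : ContDiff ℝ (⊤ : ℕ∞) ψ)
    (hc : HasCompactSupport ψ) (hs : tsupport ψ ⊆ annulus k) (θ : ℝ) :
    HasDerivAt (fun θ' => xray (invSq ψ) 0 θ') (xray (invSq (rot ψ)) 0 θ) θ := by
  obtain ⟨hψ', hc', hs'⟩ := rot_iterate_regular hψ hc hs 1
  obtain ⟨A, hA⟩ := exists_abs_le_mul_bracket hψ.continuous hc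
  obtain ⟨B, hB⟩ := exists_abs_le_mul_bracket hψ'.continuous hc'
  simp only [xray_invSq_zero]
  exact (hasDerivAt_integral_of_dominated_loc_of_deriv_le (s := Set.univ) Filter.univ_mem
    (.of_forall fun θ' => aestronglyMeasurable_radial hψ.continuous θ')
    ((integrable_indicator_Icc_const _ _ _).mono'
      (aestronglyMeasurable_radial hψ.continuous θ)
      (.of_forall fun t => abs_radial_le_indicator hs hA θ t))
    (aestronglyMeasurable_radial hψ'.continuous θ)
    (.of_forall fun t θ' _ => abs_radial_le_indicator hs' hB θ' t)
    (integrable_indicator_Icc_const _ _ _)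
    (.of_forall fun t θ' _ => (hasDerivAt_comp_polar hψ t θ').const_mul _)).2

lemma deriv_iterate_xray_invSq {ψ : ℝ × ℝ → ℝ} {k : ℕ} (hψ : ContDiff ℝ (⊤ : ℕ∞) ψ)
    (hc : HasCompactSupport ψ) (hs : tsupport ψ ⊆ annulus k) (j : ℕ) :
    deriv^[j] (fun θ => xray (invSq ψ) 0 θ) = fun θ => xray (invSq (rot^[j] ψ)) 0 θ := by
  induction j with
  | zero => rfl
  | succ j ih =>
    obtain ⟨hψ', hc', hs'⟩ := rot_iterate_regular hψ hc hs j
    rw [Function.iterate_succ_apply', ih, Function.iterate_succ_apply']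
    exact funext fun θ => (hasDerivAt_xray_invSq hψ' hc' hs' θ).deriv

/-- For `ψ` supported in the dyadic annulus, the `C³` norm of
`F(θ) = T(|x|⁻²ψ)(0,θ)` on `S¹` is controlled by `K ‖ψ‖_{S¹₃}` for a universal `K`. -/
theorem xray_KN_bound :
    ∃ K > (0:ℝ), ∀ k : ℕ, 1 ≤ k → ∀ ψ : ℝ × ℝ → ℝ, ContDiff ℝ (⊤ : ℕ∞) ψ →
      HasCompactSupport ψ → tsupport ψ ⊆ annulus k →
      ∀ C : ℝ, KNle ψ C →
      ∀ j : ℕ, j ≤ 3 → ∀ θ : ℝ,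
        |deriv^[j] (fun θ' => xray (invSq ψ) 0 θ') θ| ≤ K * C := by
  refine ⟨64 * 24, by norm_num, fun k _ ψ hψ hc hs C hC j hj θ => ?_⟩
  rw [deriv_iterate_xray_invSq hψ hc hs j, mul_assoc]
  refine abs_xray_invSq_le (rot_iterate_regular hψ hc hs j).2.2 (fun p => ?_) θ
  have h := (hC.symbolBound hψ).abs_rot_iterate_le hψ hj p
  norm_num [Nat.factorial] at h
  exact h

end
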